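/- There is a universal constant C > 0 with the following property. Let K, E > 0 and let Q : ℝ³ → Sym₀ be Lipschitz with Lipschitz constant at most K and with ∫_{ℝ³} f(Q(x)) dx ≤ E. For δ > 0 set U_δ = { x ∈ ℝ³ : dist(Q(x), 𝒩) > δ } and f_min^δ = inf{ f(P) : P ∈ Sym₀, dist(P,𝒩) ≥ δ/2 } (which is positive). Then there exists a finite set I ⊂ U_δ such that U_δ ⊆ ⋃_{x∈I} B_{δ/(2K)}(x) ⊆ U_{δ/2} and #I ≤ C · K³ · E / ( f_min^δ · δ³ ). -/

import Mathlib

/- STATEMENT 9: There is a universal constant C > 0 such that: for K, E > 0 and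
Q : ℝ³ → Sym₀ Lipschitz with constant ≤ K and ∫ f(Q) ≤ E, for every δ > 0 there is a
finite set I ⊂ U_δ with U_δ ⊆ ⋃_{x∈I} B_{δ/(2K)}(x) ⊆ U_{δ/2} and
#I ≤ C·K³·E/(f_min^δ·δ³), where U_δ = {x : dist(Q(x),𝒩) > δ} and
f_min^δ = inf{f(P) : P ∈ Sym₀, dist(P,𝒩) ≥ δ/2}. -/

noncomputable section

open Matrix MeasureTheory Metric Set

abbrev Mat3 : Type := Matrix (Fin 3) (Fin 3) ℝ
abbrev V3 : Type := EuclideanSpace ℝ (Fin 3)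
abbrev E9 : Type := EuclideanSpace ℝ (Fin 3 × Fin 3)

/-- View a point of `E9` (ℝ^{3×3} with the Euclidean = Frobenius norm) as a matrix. -/
def toM (A : E9) : Mat3 := Matrix.of fun i j => A (i, j)

def Sym0E : Set E9 := {A | (toM A).IsSymm ∧ (toM A).trace = 0}

def unitVec (n : Fin 3 → ℝ) : Prop := ∑ i, (n i) ^ 2 = 1

def uniax (s : ℝ) (n : Fin 3 → ℝ) : Mat3 :=
  s • (Matrix.vecMulVec n n - (1 / 3 : ℝ) • (1 : Mat3))

def sStar (a b c : ℝ) : ℝ := (b + Real.sqrt (b ^ 2 + 24 * a * c)) / (4 * c)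

def fLdG (a b c C : ℝ) (Q : Mat3) : ℝ :=
  C - a / 2 * (Q * Q).trace - b / 3 * (Q * Q * Q).trace + c / 4 * ((Q * Q).trace) ^ 2

/-- The vacuum manifold 𝒩 inside `E9`. -/
def NsetE (s : ℝ) : Set E9 := {A | ∃ n, unitVec n ∧ toM A = uniax s n}

/-- f_min^δ = inf { f(P) : P ∈ Sym₀, dist(P,𝒩) ≥ δ/2 }. -/
def fminδ (a b c C : ℝ) (δ : ℝ) : ℝ :=
  sInf {v | ∃ P ∈ Sym0E, δ / 2 ≤ infDist P (NsetE (sStar a b c)) ∧ v = fLdG a b c C (toM P)}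

lemma quart_id (a b c σ s : ℝ) (hc : 0 < c) (hσ : 2 * c * σ ^ 2 - b * σ - 3 * a = 0) :
    (- a / 3 * s ^ 2 - 2 * b / 27 * s ^ 3 + c / 9 * s ^ 4)
      - (- a / 3 * σ ^ 2 - 2 * b / 27 * σ ^ 3 + c / 9 * σ ^ 4)
    = c / 9 * (s - σ) ^ 2 * (s ^ 2 + (2 * σ - 2 * b / (3 * c)) * s
        + σ * (2 * σ - 2 * b / (3 * c)) / 2) := by
  have ha : a = (2 * c * σ ^ 2 - b * σ) / 3 := by linarith
  subst ha
  field_simp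
  ring

lemma sStar_eq (a b c : ℝ) (ha : 0 < a) (hc : 0 < c) :
    2 * c * (sStar a b c) ^ 2 - b * sStar a b c - 3 * a = 0 := by
  have h : (Real.sqrt (b ^ 2 + 24 * a * c)) ^ 2 = b ^ 2 + 24 * a * c :=
    Real.sq_sqrt (by positivity)
  unfold sStar
  generalize Real.sqrt (b ^ 2 + 24 * a * c) = t at *
  field_simp
  linear_combination 2 * h

lemma sStar_gt (a b c : ℝ) (ha : 0 < a) (hb : 0 < b) (hc : 0 < c) :
    b / (2 * c) < sStar a b c := by
  have h : b < Real.sqrt (b ^ 2 + 24 * a * c) := by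
    apply Real.lt_sqrt_of_sq_lt
    have : 0 < a * c := by positivity
    linarith
  unfold sStar
  rw [div_lt_div_iff₀ (by positivity) (by positivity)]
  nlinarith

/-- spectral data -/
lemma spec (P : Mat3) (hP : P.IsSymm) : ∃ (l : Fin 3 → ℝ) (U : Mat3),
    U * Uᵀ = 1 ∧ Uᵀ * U = 1 ∧ P = U * Matrix.diagonal l * Uᵀ := by
  have hH : P.IsHermitian := by
    rw [Matrix.IsHermitian, Matrix.conjTranspose_eq_transpose_of_trivial]; exact hP
  refine ⟨hH.eigenvalues, (hH.eigenvectorUnitary : Mat3), ?_, ?_, ?_⟩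
  · have := Unitary.coe_mul_star_self hH.eigenvectorUnitary
    rwa [Unitary.coe_star, Matrix.star_eq_conjTranspose, Matrix.conjTranspose_eq_transpose_of_trivial] at this
  · have := Unitary.coe_star_mul_self hH.eigenvectorUnitary
    rwa [Matrix.star_eq_conjTranspose, Matrix.conjTranspose_eq_transpose_of_trivial] at this
  · have := hH.spectral_theorem
    rw [Unitary.conjStarAlgAut_apply] at this
    rw [Matrix.star_eq_conjTranspose, Matrix.conjTranspose_eq_transpose_of_trivial] at this
    exact this

lemma spec_tr (P U : Mat3) (l : Fin 3 → ℝ) (h2 : Uᵀ * U = 1)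
    (hP : P = U * Matrix.diagonal l * Uᵀ) :
    P.trace = l 0 + l 1 + l 2 ∧ (P * P).trace = l 0 ^ 2 + l 1 ^ 2 + l 2 ^ 2 ∧
    (P * P * P).trace = l 0 ^ 3 + l 1 ^ 3 + l 2 ^ 3 := by
  have e2 : P * P = U * (Matrix.diagonal l * Matrix.diagonal l) * Uᵀ := by
    rw [hP]
    calc _ = U * Matrix.diagonal l * (Uᵀ * U) * Matrix.diagonal l * Uᵀ := by
          simp only [Matrix.mul_assoc]
      _ = _ := by rw [h2]; simp only [Matrix.mul_assoc, Matrix.one_mul]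
  have e3 : P * P * P = U * (Matrix.diagonal l * Matrix.diagonal l * Matrix.diagonal l) * Uᵀ := by
    rw [e2, hP]
    calc _ = U * (Matrix.diagonal l * Matrix.diagonal l) * (Uᵀ * U) * Matrix.diagonal l * Uᵀ := by
          simp only [Matrix.mul_assoc]
      _ = _ := by rw [h2]; simp only [Matrix.mul_assoc, Matrix.one_mul]
  have key : ∀ D : Mat3, (U * D * Uᵀ).trace = D.trace := by
    intro D
    rw [Matrix.trace_mul_comm, ← Matrix.mul_assoc, h2, Matrix.one_mul]
  refine ⟨?_, ?_, ?_⟩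
  · rw [hP, key]; simp [Matrix.trace, Fin.sum_univ_three]
  · rw [e2, key, Matrix.diagonal_mul_diagonal]; simp [Matrix.trace, Fin.sum_univ_three]; ring
  · rw [e3, key, Matrix.diagonal_mul_diagonal, Matrix.diagonal_mul_diagonal]
    simp [Matrix.trace, Fin.sum_univ_three]; ring

lemma p3_le (P : Mat3) (hP : P.IsSymm) (ht : P.trace = 0) (s : ℝ) (hs : 0 ≤ s)
    (h2 : (P * P).trace = 2 / 3 * s ^ 2) : (P * P * P).trace ≤ 2 / 9 * s ^ 3 := by
  obtain ⟨l, U, hU1, hU2, hl⟩ := spec P hP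
  obtain ⟨t1, t2, t3⟩ := spec_tr P U l hU2 hl
  rw [t3]
  rw [t1] at ht
  rw [t2] at h2
  have hz : l 2 = - l 0 - l 1 := by linarith
  rw [hz] at h2 ⊢
  generalize l 0 = x at *
  generalize l 1 = y at *
  refine abs_le_of_sq_le_sq' ?_ (by positivity) |>.2
  have e : (2 / 9 * s ^ 3) ^ 2 = (x ^ 2 + y ^ 2 + (-x - y) ^ 2) ^ 3 / 6 := by rw [h2]; ring
  rw [e]
  have : 0 ≤ ((x - y) * (2 * x + y) * (x + 2 * y)) ^ 2 := sq_nonneg _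
  nlinarith [this]

lemma uniax_of_eq (P : Mat3) (hP : P.IsSymm) (ht : P.trace = 0) (s : ℝ) (hs : 0 < s)
    (h2 : (P * P).trace = 2 / 3 * s ^ 2) (h3 : (P * P * P).trace = 2 / 9 * s ^ 3) :
    ∃ n, unitVec n ∧ P = uniax s n := by
  obtain ⟨l, U, hU1, hU2, hl⟩ := spec P hP
  obtain ⟨t1, t2, t3⟩ := spec_tr P U l hU2 hl
  rw [t3] at h3
  rw [t1] at ht
  rw [t2] at h2
  have gen : ∀ x y z : ℝ, x + y + z = 0 → x ^ 2 + y ^ 2 + z ^ 2 = 2 / 3 * s ^ 2 →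
      x ^ 3 + y ^ 3 + z ^ 3 = 2 / 9 * s ^ 3 → x = 2 * s / 3 ∨ x = - s / 3 := by
    intro x y z h1 h2 h3
    have hz : z = - x - y := by linarith
    subst hz
    have : (x - 2 * s / 3) * (x + s / 3) ^ 2 = 0 := by
      linear_combination (x / 2) * h2 + (1 / 3) * h3 
    rcases mul_eq_zero.1 this with h | h
    · left; linarith
    · right; have := pow_eq_zero_iff (two_ne_zero) |>.1 h; linarith
  have g0 := gen _ _ _ ht h2 h3
  have g1 := gen (l 1) (l 0) (l 2) (by linarith) (by linarith) (by linarith)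
  have g2 := gen (l 2) (l 0) (l 1) (by linarith) (by linarith) (by linarith)
  have hk : ∃ k, ∀ j, l j = (if j = k then s else 0) - s / 3 := by
    rcases g0 with g0 | g0 <;> rcases g1 with g1 | g1 <;> rcases g2 with g2 | g2 <;>
      first
      | (exfalso; linarith)
      | (refine ⟨0, fun j => ?_⟩; fin_cases j <;> simp [g0, g1, g2] <;> ring; done)
      | (refine ⟨1, fun j => ?_⟩; fin_cases j <;> simp [g0, g1, g2] <;> ring; done)
      | (refine ⟨2, fun j => ?_⟩; fin_cases j <;> simp [g0, g1, g2] <;> ring; done)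
  obtain ⟨k, hk⟩ := hk
  refine ⟨fun i => U i k, ?_, ?_⟩
  · have := congrFun (congrFun hU2 k) k
    simp only [Matrix.mul_apply, Matrix.transpose_apply, Matrix.one_apply_eq] at this
    unfold unitVec
    rw [← this]
    exact Finset.sum_congr rfl fun i _ => by ring
  · ext i j
    have hij := congrFun (congrFun hU1 i) j
    rw [hl]
    simp only [Matrix.mul_apply, Matrix.transpose_apply] at hij
    simp only [uniax, Matrix.smul_apply, Matrix.sub_apply, Matrix.vecMulVec_apply, smul_eq_mul]
    rw [← hij]
    rw [Matrix.mul_apply]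
    simp only [Matrix.mul_diagonal, Matrix.transpose_apply, hk]
    have : ∀ x, U i x * ((if x = k then s else 0) - s / 3) * U j x =
      (if x = k then s * (U i x * U j x) else 0) - s / 3 * (U i x * U j x) := by
      intro x; split_ifs <;> ring
    simp only [this, Finset.sum_sub_distrib, Finset.sum_ite_eq', Finset.mem_univ, if_true,
      ← Finset.mul_sum]
    ring

lemma tr_sq (A : E9) (hA : A ∈ Sym0E) : (toM A * toM A).trace = ‖A‖ ^ 2 := by
  rw [EuclideanSpace.norm_sq_eq, Fintype.sum_prod_type]
  simp only [Matrix.trace, Matrix.diag, Matrix.mul_apply]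
  refine Finset.sum_congr rfl fun i _ => Finset.sum_congr rfl fun j _ => ?_
  have := hA.1.apply i j
  rw [this, Real.norm_eq_abs, sq_abs]
  simp [toM]; ring

/-- a concrete point of the vacuum manifold -/
def base (s : ℝ) : E9 := WithLp.toLp 2 fun p => uniax s (Pi.single 0 1) p.1 p.2

lemma toM_base (s : ℝ) : toM (base s) = uniax s (Pi.single 0 1) := by
  ext i j; simp [toM, base]

lemma base_mem (s : ℝ) : base s ∈ NsetE s :=
  ⟨Pi.single 0 1, by simp [unitVec, Fin.sum_univ_three], toM_base s⟩

lemma uniax_diag (s : ℝ) :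
    uniax s (Pi.single 0 1) = Matrix.diagonal ![2 * s / 3, - s / 3, - s / 3] := by
  ext i j
  fin_cases i <;> fin_cases j <;> simp [uniax, Matrix.vecMulVec_apply] <;> ring

lemma base_sym (s : ℝ) : base s ∈ Sym0E := by
  refine ⟨?_, ?_⟩
  · rw [toM_base, uniax_diag]; exact Matrix.diagonal_transpose _
  · rw [toM_base, uniax_diag]; simp [Matrix.trace, Fin.sum_univ_three]; ring

lemma f_base (a b c C s : ℝ) : fLdG a b c C (toM (base s)) =
    C + (- a / 3 * s ^ 2 - 2 * b / 27 * s ^ 3 + c / 9 * s ^ 4) := by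
  rw [toM_base, uniax_diag, fLdG]
  simp only [Matrix.diagonal_mul_diagonal, Matrix.trace_diagonal, Fin.sum_univ_three]
  simp
  ring

lemma f_lower (a b c C : ℝ) (ha : 0 < a) (hb : 0 < b) (hc : 0 < c)
    (hC : IsLeast ((fun A => fLdG a b c C (toM A)) '' Sym0E) 0) :
    ∃ β > 0, ∀ A ∈ Sym0E,
      β * (Real.sqrt (3 / 2) * ‖A‖ - sStar a b c) ^ 2 ≤ fLdG a b c C (toM A) ∧
      (fLdG a b c C (toM A) = 0 → A ∈ NsetE (sStar a b c)) := by
  have hσ := sStar_eq a b c ha hc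
  have hgt := sStar_gt a b c ha hb hc
  have h0 : 0 ≤ fLdG a b c C (toM (base (sStar a b c))) :=
    hC.2 ⟨_, base_sym _, rfl⟩
  rw [f_base] at h0
  generalize sStar a b c = σ at *
  have hσ0 : 0 < σ := lt_trans (by positivity) hgt
  have hα : 0 < 2 * σ - 2 * b / (3 * c) := by
    have : 2 * b / (3 * c) = 4 / 3 * (b / (2 * c)) := by field_simp; ring
    rw [this]
    have : 0 < b / (2 * c) := by positivity
    linarith
  set α := 2 * σ - 2 * b / (3 * c) with hαd
  refine ⟨c / 9 * (σ * α / 2), by positivity, fun A hA => ?_⟩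
  set s := Real.sqrt (3 / 2) * ‖A‖ with hs
  have hs0 : 0 ≤ s := by positivity
  have hp2 : (toM A * toM A).trace = 2 / 3 * s ^ 2 := by
    rw [tr_sq A hA, hs, mul_pow, Real.sq_sqrt (by norm_num)]; ring
  have hp3 := p3_le _ hA.1 hA.2 s hs0 hp2
  have hq := quart_id a b c σ s hc hσ
  rw [← hαd] at hq
  have hf : fLdG a b c C (toM A) = C + (- a / 3 * s ^ 2 - 2 * b / 27 * s ^ 3 + c / 9 * s ^ 4)
      + b / 3 * (2 / 9 * s ^ 3 - (toM A * toM A * toM A).trace) := by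
    rw [fLdG, hp2]; ring
  have hb3 : 0 ≤ b / 3 * (2 / 9 * s ^ 3 - (toM A * toM A * toM A).trace) :=
    mul_nonneg (by positivity) (by linarith)
  have hexp : c / 9 * (s - σ) ^ 2 * (s ^ 2 + α * s + σ * α / 2)
     = c / 9 * (s - σ) ^ 2 * (s ^ 2 + α * s) + c / 9 * (σ * α / 2) * (s - σ) ^ 2 := by ring
  have hn : 0 ≤ c / 9 * (s - σ) ^ 2 * (s ^ 2 + α * s) := by positivity
  have hn2 : 0 ≤ c / 9 * (σ * α / 2) * (s - σ) ^ 2 := by positivity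
  refine ⟨by linarith, fun hz => ?_⟩
  have h1 : c / 9 * (σ * α / 2) * (s - σ) ^ 2 = 0 := by linarith
  have h2 : b / 3 * (2 / 9 * s ^ 3 - (toM A * toM A * toM A).trace) = 0 := by linarith
  have hsσ : s = σ := by
    rcases mul_eq_zero.1 h1 with h | h
    · exact absurd h (by positivity)
    · have := pow_eq_zero_iff (two_ne_zero) |>.1 h; linarith
  have h3 : (toM A * toM A * toM A).trace = 2 / 9 * s ^ 3 := by
    rcases mul_eq_zero.1 h2 with h | h
    · exact absurd h (by positivity)
    · linarith
  rw [← hsσ]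
  exact uniax_of_eq _ hA.1 hA.2 s (by rw [hsσ]; exact hσ0) hp2 h3

lemma cont_toM : Continuous toM := by
  unfold toM
  exact continuous_matrix fun i j => by simp only [Matrix.of_apply]; fun_prop

lemma cont_f (a b c C : ℝ) : Continuous fun A => fLdG a b c C (toM A) := by
  have := cont_toM
  unfold fLdG
  fun_prop

lemma closed_sym : IsClosed Sym0E := by
  have := cont_toM
  unfold Sym0E Matrix.IsSymm
  exact (isClosed_eq (by fun_prop) (by fun_prop)).inter (isClosed_eq (by fun_prop) (by fun_prop))

lemma fmin_pos (a b c C : ℝ) (ha : 0 < a) (hb : 0 < b) (hc : 0 < c)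
    (hC : IsLeast ((fun A => fLdG a b c C (toM A)) '' Sym0E) 0) (δ : ℝ) (hδ : 0 < δ)
    (P₀ : E9) (hP₀ : P₀ ∈ Sym0E) (hd : δ / 2 ≤ infDist P₀ (NsetE (sStar a b c))) :
    0 < fminδ a b c C δ := by
  obtain ⟨β, hβ, hl⟩ := f_lower a b c C ha hb hc hC
  set σ := sStar a b c
  set M := fLdG a b c C (toM P₀) with hM
  set T : Set E9 := {A | A ∈ Sym0E ∧ δ / 2 ≤ infDist A (NsetE σ) ∧ fLdG a b c C (toM A) ≤ M}
  have hTc : IsClosed T := by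
    refine closed_sym.inter (IsClosed.inter (isClosed_le continuous_const
      (continuous_infDist_pt _)) (isClosed_le (cont_f a b c C) continuous_const))
  have hTb : T ⊆ closedBall 0 ((σ + Real.sqrt (M / β)) / Real.sqrt (3 / 2)) := by
    rintro A ⟨h1, h2, h3⟩
    rw [mem_closedBall_zero_iff, le_div_iff₀ (by positivity)]
    have := (hl A h1).1.trans h3
    have h4 : (Real.sqrt (3 / 2) * ‖A‖ - σ) ^ 2 ≤ M / β := by
      rw [le_div_iff₀ hβ]; linarith
    have := Real.le_sqrt_of_sq_le h4
    linarith
  have hTk : IsCompact T := (isCompact_closedBall _ _).of_isClosed_subset hTc hTb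
  obtain ⟨A, hA, hmin⟩ := hTk.exists_isMinOn ⟨P₀, hP₀, hd, le_refl _⟩ (cont_f a b c C).continuousOn
  have hpos : 0 < fLdG a b c C (toM A) := by
    have h0 : 0 ≤ fLdG a b c C (toM A) := hC.2 ⟨A, hA.1, rfl⟩
    refine lt_of_le_of_ne h0 fun h => ?_
    have hmem := (hl A hA.1).2 h.symm
    have := infDist_zero_of_mem hmem
    have := hA.2.1
    linarith
  refine lt_of_lt_of_le hpos ?_
  unfold fminδ
  refine le_csInf ⟨M, P₀, hP₀, hd, hM⟩ ?_
  rintro v ⟨P, hP, hPd, rfl⟩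
  by_cases h : fLdG a b c C (toM P) ≤ M
  · exact hmin ⟨hP, hPd, h⟩
  · have : fLdG a b c C (toM A) ≤ M := hA.2.2
    linarith

lemma fmin_le (a b c C : ℝ)
    (hC : IsLeast ((fun A => fLdG a b c C (toM A)) '' Sym0E) 0) (δ : ℝ)
    (P : E9) (hP : P ∈ Sym0E) (hd : δ / 2 ≤ infDist P (NsetE (sStar a b c))) :
    fminδ a b c C δ ≤ fLdG a b c C (toM P) := by
  refine csInf_le ⟨0, ?_⟩ ⟨P, hP, hd, rfl⟩
  rintro v ⟨P, hP, -, rfl⟩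
  exact hC.2 ⟨P, hP, rfl⟩

lemma exists_max_sep (U : Set V3) (r R : ℝ) (hr : 0 < r)
    (hb : ∀ I : Finset V3, (↑I : Set V3) ⊆ U →
      (∀ x ∈ I, ∀ y ∈ I, x ≠ y → r ≤ dist x y) → (I.card : ℝ) ≤ R) :
    ∃ I : Finset V3, (↑I : Set V3) ⊆ U ∧ U ⊆ (⋃ x ∈ I, ball x r) ∧ (I.card : ℝ) ≤ R := by
  classical
  let S : Set ℕ := {n | ∃ I : Finset V3, (↑I : Set V3) ⊆ U ∧
      (∀ x ∈ I, ∀ y ∈ I, x ≠ y → r ≤ dist x y) ∧ I.card = n}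
  have hne : S.Nonempty := ⟨0, ∅, by simp, by simp, by simp⟩
  have hbd : BddAbove S := by
    refine ⟨⌊R⌋₊, ?_⟩
    rintro n ⟨I, h1, h2, rfl⟩
    exact Nat.le_floor (hb I h1 h2)
  obtain ⟨I, h1, h2, h3⟩ := Nat.sSup_mem hne hbd
  refine ⟨I, h1, fun x hx => ?_, hb I h1 h2⟩
  by_contra hcon
  simp only [mem_iUnion, mem_ball, not_exists, not_lt] at hcon
  have hxI : x ∉ I := fun h => by
    have := hcon x h
    rw [dist_self] at this
    linarith
  have hm : (insert x I).card ∈ S := by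
    refine ⟨insert x I, ?_, ?_, rfl⟩
    · rw [Finset.coe_insert]; exact insert_subset hx h1
    · intro y hy z hz hyz
      rw [Finset.mem_insert] at hy hz
      rcases hy with rfl | hy <;> rcases hz with rfl | hz
      · exact absurd rfl hyz
      · exact hcon z hz
      · rw [dist_comm]; exact hcon y hy
      · exact h2 y hy z hz hyz
  have := le_csSup hbd hm
  rw [Finset.card_insert_of_notMem hxI] at this
  omega

theorem statement9 (a b c C : ℝ) (ha : 0 < a) (hb : 0 < b) (hc : 0 < c)
    (hC : IsLeast ((fun A => fLdG a b c C (toM A)) '' Sym0E) 0) :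
    ∃ Cu > (0 : ℝ), ∀ (K Ebnd : ℝ), 0 < K → 0 < Ebnd →
      ∀ Q : V3 → E9,
        (∀ x y, ‖Q x - Q y‖ ≤ K * ‖x - y‖) →
        (∀ x, Q x ∈ Sym0E) →
        (∫⁻ x : V3, ENNReal.ofReal (fLdG a b c C (toM (Q x)))) ≤ ENNReal.ofReal Ebnd →
        ∀ δ > (0 : ℝ), ∃ I : Finset V3,
          (↑I : Set V3) ⊆ {x | δ < infDist (Q x) (NsetE (sStar a b c))} ∧
          {x | δ < infDist (Q x) (NsetE (sStar a b c))} ⊆ ⋃ x ∈ I, ball x (δ / (2 * K)) ∧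
          (⋃ x ∈ I, ball x (δ / (2 * K))) ⊆
            {x | δ / 2 < infDist (Q x) (NsetE (sStar a b c))} ∧
          (I.card : ℝ) ≤ Cu * K ^ 3 * Ebnd / (fminδ a b c C δ * δ ^ 3) := by
  have hω : 0 < volume.real (ball (0 : V3) 1) :=
    ENNReal.toReal_pos (measure_ball_pos _ _ one_pos).ne' measure_ball_lt_top.ne
  set ω := volume.real (ball (0 : V3) 1) with hωd
  refine ⟨64 / ω, by positivity, ?_⟩
  intro K Ebnd hK hE Q hLip hSym hInt δ hδ
  set N := NsetE (sStar a b c) with hN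
  have hdist : ∀ x y, infDist (Q x) N ≤ infDist (Q y) N + K * dist y x := by
    intro x y
    have h1 := infDist_le_infDist_add_dist (s := N) (x := Q x) (y := Q y)
    have h2 := hLip x y
    rw [← dist_eq_norm, ← dist_eq_norm, dist_comm x y] at h2
    linarith
  have hball : ∀ x, δ < infDist (Q x) N → ∀ y ∈ ball x (δ / (2 * K)),
      δ / 2 < infDist (Q y) N := by
    intro x hx y hy
    have h1 := hdist x y
    have h2 : K * dist y x < δ / 2 := by
      have := mul_lt_mul_of_pos_left (mem_ball.1 hy) hK
      have e : K * (δ / (2 * K)) = δ / 2 := by field_simp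
      linarith
    linarith
  have hr : 0 < δ / (2 * K) := by positivity
  obtain ⟨I, h1, h2, h3⟩ := exists_max_sep {x | δ < infDist (Q x) N} (δ / (2 * K))
    (64 / ω * K ^ 3 * Ebnd / (fminδ a b c C δ * δ ^ 3)) hr (by
      intro I hI hsep
      rcases I.eq_empty_or_nonempty with rfl | ⟨x₀, hx₀⟩
      · have : 0 ≤ fminδ a b c C δ := by
          apply Real.sInf_nonneg
          rintro v ⟨P, hP, -, rfl⟩
          exact hC.2 ⟨P, hP, rfl⟩
        simp only [Finset.card_empty, Nat.cast_zero]
        positivity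
      have hx₀' : δ < infDist (Q x₀) N := hI hx₀
      have hm : 0 < fminδ a b c C δ :=
        fmin_pos a b c C ha hb hc hC δ hδ (Q x₀) (hSym x₀) (by linarith)
      set m := fminδ a b c C δ with hmd
      set ρ := δ / (4 * K) with hρ
      have hρ0 : 0 < ρ := by positivity
      have hρr : δ / (2 * K) = ρ + ρ := by rw [hρ]; field_simp; ring
      set W : Set V3 := ⋃ x ∈ I, ball x ρ with hW
      have hWm : MeasurableSet W := I.measurableSet_biUnion fun x _ => measurableSet_ball
      have hvolb : ∀ x : V3, volume (ball x ρ) = ENNReal.ofReal (ρ ^ 3 * ω) := by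
        intro x
        rw [Measure.addHaar_ball_of_pos _ _ hρ0, hωd, ENNReal.ofReal_mul (by positivity)]
        congr 1
        · simp
        · exact (ENNReal.ofReal_toReal measure_ball_lt_top.ne).symm
      have hvol : volume W = ENNReal.ofReal (I.card * (ρ ^ 3 * ω)) := by
        rw [hW, measure_biUnion_finset ?_ fun x _ => measurableSet_ball]
        · simp only [hvolb, Finset.sum_const, nsmul_eq_mul]
          rw [ENNReal.ofReal_mul (Nat.cast_nonneg I.card), ENNReal.ofReal_natCast]
        · intro x hx y hy hxy
          apply ball_disjoint_ball
          rw [← hρr]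
          exact hsep x hx y hy hxy
      have hle : ENNReal.ofReal (m * (I.card * (ρ ^ 3 * ω))) ≤ ENNReal.ofReal Ebnd := by
        calc _ = ∫⁻ x in W, ENNReal.ofReal m := by
              rw [setLIntegral_const, hvol, ENNReal.ofReal_mul hm.le]
          _ ≤ ∫⁻ x in W, ENNReal.ofReal (fLdG a b c C (toM (Q x))) := by
              apply setLIntegral_mono' hWm
              intro y hy
              simp only [hW, mem_iUnion] at hy
              obtain ⟨x, hx, hy⟩ := hy
              apply ENNReal.ofReal_le_ofReal
              apply fmin_le a b c C hC δ _ (hSym y)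
              exact (hball x (hI hx) y (ball_subset_ball (by linarith) hy)).le
          _ ≤ ∫⁻ x, ENNReal.ofReal (fLdG a b c C (toM (Q x))) := setLIntegral_le_lintegral _ _
          _ ≤ _ := hInt
      rw [ENNReal.ofReal_le_ofReal_iff hE.le] at hle
      rw [le_div_iff₀ (by positivity)]
      have e : (I.card : ℝ) * (m * δ ^ 3) = 64 / ω * K ^ 3 * (m * (I.card * (ρ ^ 3 * ω))) := by
        rw [hρ]; field_simp; norm_num
      rw [e]
      exact mul_le_mul_of_nonneg_left hle (by positivity))
  refine ⟨I, h1, h2, ?_, h3⟩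
  intro y hy
  simp only [mem_iUnion] at hy
  obtain ⟨x, hx, hy⟩ := hy
  exact hball x (h1 hx) y hy
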